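/- Let a : ℤ² × ℤ² → ℝ be an elliptic matrix for the triangular lattice graph, and let L be the associated elliptic operator on functions u : ℤ² → ℂ. Then for every λ ∈ ℂ there is no nonzero finitely supported function u : ℤ² → ℂ with Lu = λu. (This is the case of the regular (3,6) tessellation, whose combinatorial curvature vanishes at every corner, in the paper's main theorem.) -/

import Mathlib

/-- The set of the six nearest-neighbour directions in the triangular lattice. -/
def triDirs : Finset (ℤ × ℤ) := {(1, 0), (-1, 0), (0, 1), (0, -1), (1, -1), (-1, 1)}

/-- Adjacency in the triangular lattice graph: `v ~ w` iff `w - v` is one of the six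
nearest-neighbour directions. -/
def triAdj (v w : ℤ × ℤ) : Prop := w - v ∈ triDirs

/-- The elliptic operator on the triangular lattice associated to the matrix `a`:
`(L u)(v) = a(v,v) u(v) + ∑_{w ~ v} a(v,w) u(w)`. -/
noncomputable def triL (a : (ℤ × ℤ) × (ℤ × ℤ) → ℝ) (u : ℤ × ℤ → ℂ) (v : ℤ × ℤ) : ℂ :=
  (a (v, v) : ℂ) * u v + ∑ d ∈ triDirs, (a (v, v + d) : ℂ) * u (v + d)

/-- No elliptic operator on the triangular lattice (the regular (3,6) tessellation) admits
a nonzero finitely supported eigenfunction. -/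
theorem triangular_lattice_no_compactly_supported_eigenfunction
    (a : (ℤ × ℤ) × (ℤ × ℤ) → ℝ)
    (hell₁ : ∀ v w, triAdj v w → a (v, w) ≠ 0)
    (hell₂ : ∀ v w, v ≠ w → ¬ triAdj v w → a (v, w) = 0)
    (lam : ℂ) :
    ¬ ∃ u : ℤ × ℤ → ℂ, u ≠ 0 ∧ (Function.support u).Finite ∧
      ∀ v, triL a u v = lam * u v := by
  rintro ⟨u, hu, hfin, hL⟩
  obtain ⟨⟨x, y⟩, hp, hmax⟩ := Set.exists_max_image (Function.support u)
    (fun p => toLex (p.2, p.1)) hfin (Function.support_nonempty_iff.mpr hu)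
  have hzero : ∀ s t : ℤ, y < t ∨ (t = y ∧ x < s) → u (s, t) = 0 := by
    intro s t hst
    by_contra hne
    have h := hmax (s, t) hne
    rw [Prod.Lex.toLex_le_toLex] at h
    dsimp only at h
    omega
  -- the only neighbour of `(x, y + 1)` at which `u` can be nonzero is `(x, y)`
  have hv := hL (x, y + 1)
  have hadj : a ((x, y + 1), (x, y)) ≠ 0 := hell₁ _ _ (by simp [triAdj, triDirs])
  simp [triL, triDirs, hzero x (y + 1) (by omega), hzero (x + 1) (y + 1) (by omega),
    hzero (x + -1) (y + 1) (by omega), hzero x (y + 1 + 1) (by omega),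
    hzero (x + 1) y (by omega), hzero (x + -1) (y + 1 + 1) (by omega), hadj] at hv
  exact hp hv
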